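/- Under the stated network and flexibility model with shifting costs d_{ij} = 0: let p²_cost be the infimum of the generation cost c·P_g over the DC OPF feasible set F(d₀) (assumed nonempty and bounded below). Suppose λ_LMP : 𝒞 → ℝ satisfies the unchanged-binding-constraints property: for every flexibility-feasible pair (ΔP_d, s), the infimum of c·P_g over F(d(ΔP_d)) equals p²_cost + Σ_{i∈𝒞} λ_LMP,i ΔP_{d,i}. Let (ΔP_d*, s*) be a flexibility-feasible pair minimizing Σ_{i∈𝒞} λ_LMP,i ΔP_{d,i} over all flexibility-feasible pairs, and let p¹_cost be the infimum of c·P_g over F(d(ΔP_d*)). Let p³_cost be the infimum of c·P_g over the Model 3 feasible set (assumed bounded below). Then p³_cost ≤ p¹_cost ≤ p²_cost. -/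

import Mathlib

open scoped BigOperators

variable {𝒩 𝒢 𝒞 : Type}

/-- The DC OPF feasible set `F(d)` for a nodal load vector `d : 𝒩 → ℝ`: pairs
`(θ, P_g)` satisfying nodal power balance, line flow limits, generator limits,
and the reference-angle constraint. -/
def FeasOPF [Fintype 𝒢] [DecidableEq 𝒩]
    (nodeOfGen : 𝒢 → 𝒩) (lines : Finset (𝒩 × 𝒩)) (β Plim : 𝒩 × 𝒩 → ℝ)
    (Pmin Pmax : 𝒢 → ℝ) (ref : 𝒩) (d : 𝒩 → ℝ) :
    Set ((𝒩 → ℝ) × (𝒢 → ℝ)) :=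
  {p | (∀ i : 𝒩,
          (∑ ℓ : 𝒢, if nodeOfGen ℓ = i then p.2 ℓ else 0) - d i
            = ∑ e ∈ lines.filter (fun e => e.1 = i), -β e * (p.1 e.1 - p.1 e.2)) ∧
       (∀ e ∈ lines,
          -Plim e ≤ -β e * (p.1 e.1 - p.1 e.2) ∧ -β e * (p.1 e.1 - p.1 e.2) ≤ Plim e) ∧
       (∀ ℓ : 𝒢, Pmin ℓ ≤ p.2 ℓ ∧ p.2 ℓ ≤ Pmax ℓ) ∧
       p.1 ref = 0}

/-- A pair `(ΔPd, s)` is flexibility-feasible: lossless load shifting (1a),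
no self-shifts, shift caps `M`, and per-data-center shift limits `ε_i · P_{d,i}`. -/
def FlexFeasible [Fintype 𝒞] (Pd ε : 𝒞 → ℝ) (M : 𝒞 × 𝒞 → ℝ)
    (ΔPd : 𝒞 → ℝ) (s : 𝒞 × 𝒞 → ℝ) : Prop :=
  (∀ i : 𝒞, ΔPd i = (∑ j : 𝒞, s (j, i)) - ∑ k : 𝒞, s (i, k)) ∧
  (∀ i : 𝒞, s (i, i) = 0) ∧
  (∀ i j : 𝒞, 0 ≤ s (i, j) ∧ s (i, j) ≤ M (i, j)) ∧
  (∀ i : 𝒞, -(ε i * Pd i) ≤ ΔPd i ∧ ΔPd i ≤ ε i * Pd i)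

/-- The shifted nodal load `d(ΔPd)`: the baseline load at each node plus the sum of
the load changes of the data centers attached to that node. -/
def shiftedLoad [Fintype 𝒞] [DecidableEq 𝒩]
    (nodeOfDC : 𝒞 → 𝒩) (d₀ : 𝒩 → ℝ) (ΔPd : 𝒞 → ℝ) : 𝒩 → ℝ :=
  fun n => d₀ n + ∑ i : 𝒞, if nodeOfDC i = n then ΔPd i else 0

/-- The Model 3 feasible set: tuples `(θ, P_g, ΔPd, s)` such that `(ΔPd, s)` is
flexibility-feasible and `(θ, P_g) ∈ F(d(ΔPd))`. -/
def Model3Feas [Fintype 𝒢] [Fintype 𝒞] [DecidableEq 𝒩]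
    (nodeOfGen : 𝒢 → 𝒩) (lines : Finset (𝒩 × 𝒩)) (β Plim : 𝒩 × 𝒩 → ℝ)
    (Pmin Pmax : 𝒢 → ℝ) (ref : 𝒩) (nodeOfDC : 𝒞 → 𝒩) (d₀ : 𝒩 → ℝ)
    (Pd ε : 𝒞 → ℝ) (M : 𝒞 × 𝒞 → ℝ) :
    Set ((𝒩 → ℝ) × (𝒢 → ℝ) × (𝒞 → ℝ) × (𝒞 × 𝒞 → ℝ)) :=
  {x | FlexFeasible Pd ε M x.2.2.1 x.2.2.2 ∧
       (x.1, x.2.1) ∈ FeasOPF nodeOfGen lines β Plim Pmin Pmax ref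
          (shiftedLoad nodeOfDC d₀ x.2.2.1)}

/-- Lemma 1 of the paper, with shifting costs `d_{ij} = 0`.
Let `p²_cost` be the infimum of the generation cost `c · P_g` over the DC OPF feasible
set `F(d₀)` (nonempty and bounded below).  Suppose `λ_LMP : 𝒞 → ℝ` satisfies the
unchanged-binding-constraints property: for every flexibility-feasible pair `(ΔPd, s)`,
the set `F(d(ΔPd))` is nonempty and the infimum of `c · P_g` over it equals
`p²_cost + ∑_{i∈𝒞} λ_LMP i · ΔPd i`.  Let `(ΔPd*, s*)` be a flexibility-feasible pair
minimizing `∑_{i∈𝒞} λ_LMP i · ΔPd i` over all flexibility-feasible pairs (this is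
Model 1 with `f_cost` and `d_{ij} = 0`), and let `p¹_cost` be the infimum of `c · P_g`
over `F(d(ΔPd*))`.  Let `p³_cost` be the infimum of `c · P_g` over the Model 3 feasible
set (bounded below).  Then `p³_cost ≤ p¹_cost ≤ p²_cost`. -/
theorem model3_cost_le_model1_le_model2 [Fintype 𝒢] [Fintype 𝒞] [DecidableEq 𝒩]
    (nodeOfGen : 𝒢 → 𝒩) (lines : Finset (𝒩 × 𝒩)) (β Plim : 𝒩 × 𝒩 → ℝ)
    (Pmin Pmax : 𝒢 → ℝ) (ref : 𝒩) (nodeOfDC : 𝒞 → 𝒩) (d₀ : 𝒩 → ℝ)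
    (Pd ε : 𝒞 → ℝ) (M : 𝒞 × 𝒞 → ℝ) (c : 𝒢 → ℝ)
    (hPd : ∀ i : 𝒞, 0 ≤ Pd i) (hε : ∀ i : 𝒞, 0 ≤ ε i) (hM : ∀ i j : 𝒞, 0 ≤ M (i, j))
    -- `F(d₀)` is nonempty and the cost objective is bounded below on it
    (hne₀ : (FeasOPF nodeOfGen lines β Plim Pmin Pmax ref d₀).Nonempty)
    (hbdd₀ : BddBelow ((fun p : (𝒩 → ℝ) × (𝒢 → ℝ) => ∑ ℓ : 𝒢, c ℓ * p.2 ℓ) ''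
        FeasOPF nodeOfGen lines β Plim Pmin Pmax ref d₀))
    -- Model 2 optimal cost
    (p₂ : ℝ)
    (hp₂ : p₂ = sInf ((fun p : (𝒩 → ℝ) × (𝒢 → ℝ) => ∑ ℓ : 𝒢, c ℓ * p.2 ℓ) ''
        FeasOPF nodeOfGen lines β Plim Pmin Pmax ref d₀))
    -- the LMPs and the unchanged-binding-constraints property
    (LMP : 𝒞 → ℝ)
    (hLMP : ∀ (ΔPd : 𝒞 → ℝ) (s : 𝒞 × 𝒞 → ℝ), FlexFeasible Pd ε M ΔPd s →
        (FeasOPF nodeOfGen lines β Plim Pmin Pmax ref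
            (shiftedLoad nodeOfDC d₀ ΔPd)).Nonempty ∧
        sInf ((fun p : (𝒩 → ℝ) × (𝒢 → ℝ) => ∑ ℓ : 𝒢, c ℓ * p.2 ℓ) ''
            FeasOPF nodeOfGen lines β Plim Pmin Pmax ref (shiftedLoad nodeOfDC d₀ ΔPd))
          = p₂ + ∑ i : 𝒞, LMP i * ΔPd i)
    -- the Model 1 optimal load shift `(ΔPd*, s*)`
    (ΔPdStar : 𝒞 → ℝ) (sStar : 𝒞 × 𝒞 → ℝ)
    (hflexStar : FlexFeasible Pd ε M ΔPdStar sStar)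
    (hminStar : ∀ (ΔPd : 𝒞 → ℝ) (s : 𝒞 × 𝒞 → ℝ), FlexFeasible Pd ε M ΔPd s →
        ∑ i : 𝒞, LMP i * ΔPdStar i ≤ ∑ i : 𝒞, LMP i * ΔPd i)
    -- Model 1 optimal cost
    (p₁ : ℝ)
    (hp₁ : p₁ = sInf ((fun p : (𝒩 → ℝ) × (𝒢 → ℝ) => ∑ ℓ : 𝒢, c ℓ * p.2 ℓ) ''
        FeasOPF nodeOfGen lines β Plim Pmin Pmax ref (shiftedLoad nodeOfDC d₀ ΔPdStar)))
    -- Model 3: cost bounded below, and its optimal cost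
    (hbdd₃ : BddBelow ((fun x : (𝒩 → ℝ) × (𝒢 → ℝ) × (𝒞 → ℝ) × (𝒞 × 𝒞 → ℝ) =>
          ∑ ℓ : 𝒢, c ℓ * x.2.1 ℓ) ''
        Model3Feas nodeOfGen lines β Plim Pmin Pmax ref nodeOfDC d₀ Pd ε M))
    (p₃ : ℝ)
    (hp₃ : p₃ = sInf ((fun x : (𝒩 → ℝ) × (𝒢 → ℝ) × (𝒞 → ℝ) × (𝒞 × 𝒞 → ℝ) =>
          ∑ ℓ : 𝒢, c ℓ * x.2.1 ℓ) ''
        Model3Feas nodeOfGen lines β Plim Pmin Pmax ref nodeOfDC d₀ Pd ε M)) :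
    p₃ ≤ p₁ ∧ p₁ ≤ p₂ := by
  constructor
  · rw [hp₃, hp₁]
    apply le_csInf ((hLMP ΔPdStar sStar hflexStar).1.image _)
    rintro _ ⟨p, hp, rfl⟩
    exact csInf_le hbdd₃ ⟨(p.1, p.2, ΔPdStar, sStar), ⟨hflexStar, hp⟩, rfl⟩
  · have hzero : FlexFeasible Pd ε M (fun _ => 0) (fun _ => 0) := by
      refine ⟨fun i => by simp, fun i => rfl, fun i j => ⟨le_rfl, hM i j⟩, fun i => ?_⟩
      have h := mul_nonneg (hε i) (hPd i)
      exact ⟨neg_nonpos.mpr h, h⟩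
    have h1 := hminStar _ _ hzero
    have h2 := (hLMP ΔPdStar sStar hflexStar).2
    simp only [mul_zero, Finset.sum_const_zero] at h1
    rw [hp₁, h2]
    linarith
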